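/- Let X, Y be locally compact Hausdorff spaces and P : C₀(X) → C₀(Y) an orthogonally additive n-homogeneous polynomial which is an n-isometry on positive elements (‖P(f)‖ = ‖f‖ⁿ for f ≥ 0) and whose range is regular. Then there exist a continuous unimodular function h on Y and a homeomorphism φ : Y → X such that P(f)(y) = h(y)(f(φ(y)))ⁿ for all f ∈ C₀(X) and y ∈ Y. -/

import Mathlib

open scoped ZeroAtInfty ComplexOrder

/-- `P : E → F` is a bounded `n`-homogeneous polynomial: `P x = L(x,…,x)` for a bounded
symmetric `n`-linear map `L`. -/
def IsHomogPolynomial {E F : Type*} [NormedAddCommGroup E] [NormedSpace ℂ E]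
    [NormedAddCommGroup F] [NormedSpace ℂ F] (n : ℕ) (P : E → F) : Prop :=
  ∃ L : ContinuousMultilinearMap ℂ (fun _ : Fin n => E) F,
    (∀ (v : Fin n → E) (σ : Equiv.Perm (Fin n)), (L fun i => v (σ i)) = L v) ∧
    ∀ x : E, P x = L fun _ => x

section Part1
open BoundedContinuousFunction

lemma alt_zero {n : ℕ} (G : Finset (Fin n) → ℂ) (j : Fin n)
    (h : ∀ s, j ∉ s → G (insert j s) = G s) :
    ∑ s : Finset (Fin n), (-1 : ℂ) ^ s.card * G s = 0 := by
  refine Finset.sum_involution (fun s _ => if j ∈ s then s.erase j else insert j s) ?_ ?_ ?_ ?_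
  · intro s _
    by_cases hj : j ∈ s
    · have h1 := h (s.erase j) (by simp)
      rw [Finset.insert_erase hj] at h1
      have h2 := Finset.card_erase_add_one hj
      simp only [hj, if_true]
      rw [h1, ← h2, pow_succ]; ring
    · simp only [hj, if_false]
      rw [h s hj, Finset.card_insert_of_notMem hj, pow_succ]; ring
  · intro s _ _
    by_cases hj : j ∈ s
    · simp only [hj, if_true]
      intro h'
      have h3 := Finset.notMem_erase j s
      rw [h'] at h3
      exact h3 hj
    · simp only [hj, if_false]
      intro h'
      exact hj (h' ▸ Finset.mem_insert_self j s)
  · intro s _; simp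
  · intro s _
    by_cases hj : j ∈ s
    · simp [hj]
    · simp [hj]

lemma polar {n : ℕ} {E : Type*} [AddCommGroup E] [Module ℂ E]
    (L : MultilinearMap ℂ (fun _ : Fin n => E) ℂ)
    (hs : ∀ (v : Fin n → E) (σ : Equiv.Perm (Fin n)), (L fun i => v (σ i)) = L v)
    (v : Fin n → E) :
    ∃ c : ℂ, c ≠ 0 ∧
      ∑ s : Finset (Fin n), (-1 : ℂ) ^ s.card * L (fun _ => ∑ j ∈ s, v j) = c * L v := by
  classical
  have hexp : ∀ s : Finset (Fin n), L (fun _ => ∑ j ∈ s, v j)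
      = ∑ κ : Fin n → Fin n, (if ∀ i, κ i ∈ s then (1 : ℂ) else 0) * L (fun i => v (κ i)) := by
    intro s
    have : (fun _ : Fin n => ∑ j ∈ s, v j)
        = fun _ : Fin n => ∑ j, (if j ∈ s then (1 : ℂ) else 0) • v j := by
      funext _
      simp [ite_smul, Finset.sum_ite_mem]
    rw [this, L.map_sum]
    refine Finset.sum_congr rfl fun κ _ => ?_
    rw [L.map_smul_univ (fun i => if κ i ∈ s then (1 : ℂ) else 0) (fun i => v (κ i))]
    rw [Finset.prod_ite_zero]
    simp
  have hκ : ∀ κ : Fin n → Fin n,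
      ∑ s : Finset (Fin n), (-1 : ℂ) ^ s.card *
        ((if ∀ i, κ i ∈ s then (1 : ℂ) else 0) * L (fun i => v (κ i)))
      = (if Function.Bijective κ then (-1 : ℂ) ^ n else 0) * L v := by
    intro κ
    by_cases hb : Function.Bijective κ
    · have h1 : L (fun i => v (κ i)) = L v := hs v (Equiv.ofBijective κ hb)
      rw [Finset.sum_eq_single Finset.univ]
      · rw [if_pos hb, if_pos (by simp), h1]
        simp
      · intro s _ hsu
        have : ¬ ∀ i, κ i ∈ s := by
          intro h
          apply hsu
          ext j
          obtain ⟨i, rfl⟩ := hb.2 j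
          simp [h i]
        simp [this]
      · simp
    · have hns : ¬ Function.Surjective κ := fun h => hb (Finite.surjective_iff_bijective.1 h)
      simp only [Function.Surjective, not_forall, not_exists] at hns
      obtain ⟨j, hj⟩ := hns
      rw [if_neg hb, zero_mul]
      refine alt_zero _ j ?_
      intro s _
      simp [Finset.mem_insert, hj]
  refine ⟨∑ κ : Fin n → Fin n, if Function.Bijective κ then (-1 : ℂ) ^ n else 0, ?_, ?_⟩
  · rw [← Finset.sum_filter, Finset.sum_const, nsmul_eq_mul]
    refine mul_ne_zero ?_ (pow_ne_zero _ (by norm_num))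
    rw [Nat.cast_ne_zero]
    exact Finset.card_ne_zero.2 ⟨id, Finset.mem_filter.2 ⟨Finset.mem_univ _, Function.bijective_id⟩⟩
  · simp_rw [hexp, Finset.mul_sum]
    rw [Finset.sum_comm]
    simp_rw [hκ]
    rw [Finset.sum_mul]

lemma group_orth {n : ℕ} {E : Type*} [CommRing E] [Module ℂ E]
    (L : MultilinearMap ℂ (fun _ : Fin n => E) ℂ)
    (hs : ∀ (v : Fin n → E) (σ : Equiv.Perm (Fin n)), (L fun i => v (σ i)) = L v)
    (ho : ∀ f g : E, f * g = 0 → L (fun _ => f + g) = L (fun _ => f) + L (fun _ => g))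
    (v : Fin n → E) (A : Finset (Fin n)) (a b : Fin n) (ha : a ∈ A) (hb : b ∉ A)
    (hv : ∀ i ∈ A, ∀ j ∉ A, v i * v j = 0) : L v = 0 := by
  classical
  obtain ⟨c, hc, h⟩ := polar L hs v
  have : ∀ s : Finset (Fin n), L (fun _ => ∑ j ∈ s, v j)
      = L (fun _ => ∑ j ∈ s with j ∈ A, v j) + L (fun _ => ∑ j ∈ s with j ∉ A, v j) := by
    intro s
    rw [← ho, Finset.sum_filter_add_sum_filter_not]
    rw [Finset.sum_mul_sum]
    refine Finset.sum_eq_zero fun i hi => Finset.sum_eq_zero fun j hj => ?_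
    exact hv i (Finset.mem_filter.1 hi).2 j (Finset.mem_filter.1 hj).2
  rw [Finset.sum_congr rfl (fun s _ => by rw [this s, mul_add]), Finset.sum_add_distrib] at h
  rw [alt_zero _ b, alt_zero _ a] at h
  · rw [add_zero] at h
    exact (mul_eq_zero.1 h.symm).resolve_left hc
  · intro s _; simp [Finset.filter_insert, ha]
  · intro s _; simp [Finset.filter_insert, hb]

/-- staircase -/
noncomputable def stair (k : ℕ) (t : ℝ) : ℝ := max 0 (min 1 (t - k + 1))
/-- hat -/
noncomputable def hatf (k : ℕ) (t : ℝ) : ℝ := stair k t - stair (k + 1) t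

lemma stair_cont (k : ℕ) : Continuous (stair k) := by unfold stair; fun_prop
lemma hatf_cont (k : ℕ) : Continuous (hatf k) := by
  unfold hatf; exact (stair_cont k).sub (stair_cont _)

lemma hatf_nonneg (k : ℕ) (t : ℝ) : 0 ≤ hatf k t := by
  unfold hatf stair
  push_cast
  have : max 0 (min 1 (t - (k + 1) + 1)) ≤ max 0 (min 1 (t - k + 1)) := by
    gcongr; linarith
  linarith

lemma hatf_sum (N : ℕ) (t : ℝ) (h0 : 0 ≤ t) (h1 : t ≤ N) :
    ∑ k ∈ Finset.range (N + 1), hatf k t = 1 := by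
  unfold hatf
  rw [Finset.sum_range_sub' (fun k => stair k t)]
  have e1 : stair 0 t = 1 := by
    unfold stair; push_cast; rw [min_eq_left (by linarith)]; simp
  have e2 : stair (N + 1) t = 0 := by
    unfold stair; push_cast
    exact max_eq_left ((min_le_right _ _).trans (by linarith))
  rw [e1, e2, sub_zero]

lemma stair_sum (N : ℕ) (t : ℝ) (h0 : 0 ≤ t) :
    ∑ k ∈ Finset.range N, stair (k + 1) t = min t N := by
  induction N with
  | zero => simp [h0]
  | succ N ih =>
    rw [Finset.sum_range_succ, ih]
    unfold stair; push_cast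
    rcases le_total t N with h | h
    · have e : min t ((N : ℝ) + 1) = t := min_eq_left (by linarith)
      rw [e, min_eq_left h, max_eq_left ((min_le_right _ _).trans (by linarith)), add_zero]
    · rw [min_eq_right h]
      rcases le_total t (N + 1) with h' | h'
      · rw [min_eq_left h', min_eq_right (by linarith), max_eq_right (by linarith)]; ring
      · rw [min_eq_right h', min_eq_left (by linarith), max_eq_right (by linarith)]

lemma hatf_wsum_aux (N : ℕ) (t : ℝ) :
    ∑ k ∈ Finset.range (N + 1), (k : ℝ) * hatf k t
      = ∑ k ∈ Finset.range N, stair (k + 1) t - N * stair (N + 1) t := by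
  induction N with
  | zero => simp
  | succ N ih =>
    rw [Finset.sum_range_succ, ih, Finset.sum_range_succ]
    unfold hatf; push_cast; ring

lemma hatf_wsum (N : ℕ) (t : ℝ) (h0 : 0 ≤ t) (h1 : t ≤ N) :
    ∑ k ∈ Finset.range (N + 1), (k : ℝ) * hatf k t = t := by
  rw [hatf_wsum_aux, stair_sum N t h0, min_eq_left h1]
  have e2 : stair (N + 1) t = 0 := by
    unfold stair; push_cast
    exact max_eq_left ((min_le_right _ _).trans (by linarith))
  rw [e2]; ring

lemma hatf_orth (i j : ℕ) (hij : i + 2 ≤ j) (t : ℝ) : hatf i t * hatf j t = 0 := by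
  have hij' : (i : ℝ) + 2 ≤ j := by exact_mod_cast hij
  rcases le_total (i + 1 : ℝ) t with h | h
  · have : hatf i t = 0 := by
      unfold hatf stair; push_cast
      rw [min_eq_left (by linarith), min_eq_left (by linarith)]; ring
    rw [this, zero_mul]
  · have : hatf j t = 0 := by
      unfold hatf stair; push_cast
      rw [max_eq_left ((min_le_right _ _).trans (by linarith)),
        max_eq_left ((min_le_right _ _).trans (by linarith))]; ring
    rw [this, mul_zero]

lemma hatf_le_one (i : ℕ) (t : ℝ) : hatf i t ≤ 1 := by
  have h1 : stair i t ≤ 1 := by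
    unfold stair; exact max_le zero_le_one (min_le_left _ _)
  have h2 : 0 ≤ stair (i + 1) t := by unfold stair; exact le_max_left _ _
  unfold hatf; linarith

end Part1

section Part2
open BoundedContinuousFunction

lemma expand {n m : ℕ} {E : Type*} [CommRing E] [Algebra ℂ E]
    (B : MultilinearMap ℂ (fun _ : Fin n => E) ℂ) (p : Fin m → E) (v : Fin n → E)
    (c : Fin n → Fin m → ℂ) :
    B (fun j => (∑ i, c j i • p i) * v j)
      = ∑ κ : Fin n → Fin m, (∏ j, c j (κ j)) * B (fun j => p (κ j) * v j) := by
  have : (fun j => (∑ i, c j i • p i) * v j) = fun j => ∑ i, c j i • (p i * v j) := by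
    funext j; rw [Finset.sum_mul]; simp_rw [smul_mul_assoc]
  rw [this, B.map_sum]
  refine Finset.sum_congr rfl fun κ _ => ?_
  rw [B.map_smul_univ (fun j => c j (κ j)) (fun j => p (κ j) * v j), smul_eq_mul]

lemma gap {n m : ℕ} (κ : Fin n → Fin m) (a b : Fin n) (h : (κ a : ℕ) + n ≤ κ b) :
    ∃ k : ℕ, (κ a : ℕ) < k ∧ k < κ b ∧ ∀ j, (κ j : ℕ) ≠ k := by
  by_contra hcon
  push Not at hcon
  have hsub : Finset.Icc (κ a : ℕ) (κ b) ⊆ Finset.univ.image (fun j => (κ j : ℕ)) := by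
    intro k hk
    rw [Finset.mem_Icc] at hk
    rw [Finset.mem_image]
    rcases hk.1.eq_or_lt with h1 | h1
    · exact ⟨a, Finset.mem_univ _, h1⟩
    rcases hk.2.eq_or_lt with h2 | h2
    · exact ⟨b, Finset.mem_univ _, h2.symm⟩
    obtain ⟨j, hj⟩ := hcon k h1 h2
    exact ⟨j, Finset.mem_univ _, hj⟩
  have h1 := Finset.card_le_card hsub
  have h2 : (Finset.univ.image (fun j => (κ j : ℕ))).card ≤ n := by
    simpa using Finset.card_image_le (s := (Finset.univ : Finset (Fin n))) (f := fun j => (κ j : ℕ))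
  rw [Nat.card_Icc] at h1
  omega

lemma span_zero {n m : ℕ} {E : Type*} [CommRing E] [Module ℂ E]
    (L : MultilinearMap ℂ (fun _ : Fin n => E) ℂ)
    (hs : ∀ (v : Fin n → E) (σ : Equiv.Perm (Fin n)), (L fun i => v (σ i)) = L v)
    (ho : ∀ f g : E, f * g = 0 → L (fun _ => f + g) = L (fun _ => f) + L (fun _ => g))
    (p : Fin m → E) (hp : ∀ i j : Fin m, (i : ℕ) + 2 ≤ j → p i * p j = 0)
    (v : Fin n → E) (κ : Fin n → Fin m) (a b : Fin n) (h : (κ a : ℕ) + n ≤ κ b) :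
    L (fun j => p (κ j) * v j) = 0 := by
  obtain ⟨k, h1, h2, h3⟩ := gap κ a b h
  refine group_orth L hs ho _ (Finset.univ.filter fun j => (κ j : ℕ) < k) a b ?_ ?_ ?_
  · simpa using h1
  · simpa using h2.le
  · intro i hi j hj
    simp only [Finset.mem_filter, Finset.mem_univ, true_and, not_lt] at hi hj
    have := h3 j
    have h4 := hp (κ i) (κ j) (by omega)
    calc p (κ i) * v i * (p (κ j) * v j) = (p (κ i) * p (κ j)) * (v i * v j) := by ring
      _ = 0 := by rw [h4, zero_mul]

lemma bmod_eq (n : ℕ) (x y : ℕ) (h1 : x < y + n) (h2 : y < x + n) :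
    ((x : ℤ) - y) = Int.bmod (((x % (2 * n) : ℕ) : ℤ) - ((y % (2 * n) : ℕ) : ℤ)) (2 * n) := by
  push_cast
  rw [Int.sub_bmod, ]
  have e : ∀ z : ℤ, (z % (2 * (n : ℤ))).bmod (2 * n) = z.bmod (2 * n) := by
    intro z
    have := Int.emod_bmod z (2 * n)
    push_cast at this
    exact this
  rw [e, e, ← Int.sub_bmod]
  symm
  apply Int.bmod_eq_of_le <;> push_cast <;> omega

lemma sum_bound {n m : ℕ} (hn : 0 < n) {E : Type*} [NormedCommRing E] [NormedAlgebra ℂ E]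
    (B : ContinuousMultilinearMap ℂ (fun _ : Fin n => E) ℂ)
    (hs : ∀ (v : Fin n → E) (σ : Equiv.Perm (Fin n)), (B fun i => v (σ i)) = B v)
    (ho : ∀ f g : E, f * g = 0 → B (fun _ => f + g) = B (fun _ => f) + B (fun _ => g))
    (p : Fin m → E) (hp : ∀ i j : Fin m, (i : ℕ) + 2 ≤ j → p i * p j = 0)
    (hq : ∀ c : Fin m → ℂ, (∀ i, c i = 0 ∨ c i = 1) → ‖∑ i, c i • p i‖ ≤ 1)
    (v : Fin n → E) (a b : Fin n) :
    ‖∑ κ : Fin n → Fin m, ((κ a : ℂ) - (κ b : ℂ)) * B (fun j => p (κ j) * v j)‖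
      ≤ ∑ _ρ : Fin n → Fin (2 * n), n * (‖B‖ * ∏ j, ‖v j‖) := by
  have hr : ∀ x : ℕ, x % (2 * n) < 2 * n := fun x => Nat.mod_lt _ (by omega)
  let d : (Fin n → Fin (2 * n)) → ℤ := fun ρ => Int.bmod ((ρ a : ℕ) - (ρ b : ℕ) : ℤ) (2 * n)
  have hd : ∀ ρ, ‖(d ρ : ℂ)‖ ≤ n := by
    intro ρ
    rw [Complex.norm_intCast]
    have h1 := Int.le_bmod (x := ((ρ a : ℕ) - (ρ b : ℕ) : ℤ)) (m := 2 * n) (by omega)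
    have h2 := Int.bmod_lt (x := ((ρ a : ℕ) - (ρ b : ℕ) : ℤ)) (m := 2 * n) (by omega)
    have h3 : |d ρ| ≤ n := by
      rw [abs_le]; push_cast at h1 h2
      constructor <;> simp only [d] <;> omega
    exact_mod_cast h3
  have key : ∑ κ : Fin n → Fin m, ((κ a : ℂ) - (κ b : ℂ)) * B (fun j => p (κ j) * v j)
      = ∑ ρ : Fin n → Fin (2 * n), (d ρ : ℂ) *
        B (fun j => (∑ i : Fin m, (if (i : ℕ) % (2 * n) = ρ j then (1 : ℂ) else 0) • p i) * v j) := by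
    have : ∀ ρ : Fin n → Fin (2 * n), (d ρ : ℂ) *
        B (fun j => (∑ i : Fin m, (if (i : ℕ) % (2 * n) = ρ j then (1 : ℂ) else 0) • p i) * v j)
        = ∑ κ : Fin n → Fin m, (d ρ : ℂ) *
          ((if (fun j => (⟨(κ j : ℕ) % (2 * n), hr _⟩ : Fin (2 * n))) = ρ then 1 else 0) *
            B (fun j => p (κ j) * v j)) := by
      intro ρ
      have h1 := expand B.toMultilinearMap p v
        (fun j i => if (i : ℕ) % (2 * n) = ρ j then (1 : ℂ) else 0)
      simp only [ContinuousMultilinearMap.coe_coe] at h1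
      rw [h1, Finset.mul_sum]
      refine Finset.sum_congr rfl fun κ _ => ?_
      congr 2
      rw [Finset.prod_ite_zero]
      simp [funext_iff, Fin.ext_iff]
    simp_rw [this]
    rw [Finset.sum_comm]
    refine Finset.sum_congr rfl fun κ _ => ?_
    rw [Finset.sum_eq_single (fun j => (⟨(κ j : ℕ) % (2 * n), hr _⟩ : Fin (2 * n)))]
    · rw [if_pos rfl, one_mul]
      by_cases h1 : (κ a : ℕ) < κ b + n
      · by_cases h2 : (κ b : ℕ) < κ a + n
        · congr 1
          have := bmod_eq n (κ a) (κ b) h1 h2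
          simp only [d]
          rw [← this]; push_cast; rfl
        · have := span_zero B.toMultilinearMap hs ho p hp v κ a b (by omega)
          simp only [ContinuousMultilinearMap.coe_coe] at this
          rw [this]; simp
      · have := span_zero B.toMultilinearMap hs ho p hp v κ b a (by omega)
        simp only [ContinuousMultilinearMap.coe_coe] at this
        rw [this]; simp
    · intro ρ _ hρ
      rw [if_neg (Ne.symm hρ)]; ring
    · simp
  rw [key]
  refine (norm_sum_le _ _).trans (Finset.sum_le_sum fun ρ _ => ?_)
  rw [norm_mul]
  refine mul_le_mul (hd ρ) ?_ (norm_nonneg _) (by positivity)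
  refine (B.le_opNorm _).trans ?_
  gcongr with j _
  refine (norm_mul_le _ _).trans ?_
  refine mul_le_of_le_one_left (norm_nonneg _) (hq _ fun i => ?_)
  by_cases h : (i : ℕ) % (2 * n) = ρ j <;> simp [h]

lemma assoc01 {X : Type*} [TopologicalSpace X] {n : ℕ} (hn : 0 < n)
    (B : ContinuousMultilinearMap ℂ (fun _ : Fin n => X →ᵇ ℂ) ℂ)
    (hs : ∀ (v : Fin n → X →ᵇ ℂ) (σ : Equiv.Perm (Fin n)), (B fun i => v (σ i)) = B v)
    (ho : ∀ f g : X →ᵇ ℂ, f * g = 0 → B (fun _ => f + g) = B (fun _ => f) + B (fun _ => g))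
    (r : X →ᵇ ℂ) (hr : ∀ x, ∃ t : ℝ, 0 ≤ t ∧ t ≤ 1 ∧ r x = t)
    (v : Fin n → X →ᵇ ℂ) (a b : Fin n) :
    B (fun j => (if j = a then r else 1) * v j) = B (fun j => (if j = b then r else 1) * v j) := by
  set K : ℝ := ∑ _ρ : Fin n → Fin (2 * n), n * (‖B‖ * ∏ j, ‖v j‖) with hK
  set D := B (fun j => (if j = a then r else 1) * v j) - B (fun j => (if j = b then r else 1) * v j)
    with hD
  have main : ∀ N : ℕ, N * ‖D‖ ≤ K := by
    intro N
    have hc : ∀ i, Continuous fun x => ((hatf i (N * (r x).re) : ℝ) : ℂ) := fun i =>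
      Complex.continuous_ofReal.comp ((hatf_cont i).comp
        (continuous_const.mul (Complex.continuous_re.comp r.continuous)))
    let p : Fin (N + 1) → X →ᵇ ℂ := fun i =>
      ofNormedAddCommGroup (fun x => ((hatf i (N * (r x).re) : ℝ) : ℂ)) (hc i) 1 (by
        intro x
        rw [Complex.norm_real, Real.norm_eq_abs, abs_of_nonneg (hatf_nonneg _ _)]
        exact hatf_le_one _ _)
    have hpx : ∀ i x, p i x = ((hatf i (N * (r x).re) : ℝ) : ℂ) := fun i x => rfl
    have hre : ∀ x, 0 ≤ (r x).re ∧ (r x).re ≤ 1 ∧ r x = (r x).re := by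
      intro x
      obtain ⟨t, h0, h1, h2⟩ := hr x
      rw [h2]; simp [h0, h1]
    have hre' : ∀ x, 0 ≤ N * (r x).re ∧ N * (r x).re ≤ N := by
      intro x
      obtain ⟨h0, h1, -⟩ := hre x
      exact ⟨by positivity, mul_le_of_le_one_right (by positivity) h1⟩
    have hsum1 : ∑ i, (1 : ℂ) • p i = 1 := by
      ext x
      have := hatf_sum N _ (hre' x).1 (hre' x).2
      rw [Finset.sum_range] at this
      simp only [one_smul, coe_sum, Finset.sum_apply, hpx, coe_one, Pi.one_apply]
      exact_mod_cast this
    have hsum2 : ∑ i : Fin (N + 1), ((i : ℕ) : ℂ) • p i = (N : ℂ) • r := by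
      ext x
      have := hatf_wsum N _ (hre' x).1 (hre' x).2
      rw [Finset.sum_range] at this
      simp only [coe_sum, Finset.sum_apply, coe_smul, hpx, smul_eq_mul]
      rw [(hre x).2.2]
      simp only [Complex.ofReal_re]
      exact_mod_cast this
    have hex : ∀ a : Fin n, (N : ℂ) * B (fun j => (if j = a then r else 1) * v j)
        = ∑ κ : Fin n → Fin (N + 1), ((κ a : ℕ) : ℂ) * B (fun j => p (κ j) * v j) := by
      intro a
      have h1 := expand B.toMultilinearMap p v (fun j i => if j = a then ((i : ℕ) : ℂ) else 1)
      simp only [ContinuousMultilinearMap.coe_coe, Finset.prod_ite_eq', Finset.mem_univ,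
        if_true] at h1
      rw [← h1]
      have h2 := B.map_update_smul (fun j => (if j = a then r else 1) * v j) a (N : ℂ) (r * v a)
      have h3 : Function.update (fun j => (if j = a then r else 1) * v j) a (r * v a)
          = fun j => (if j = a then r else 1) * v j := by
        funext j
        by_cases h : j = a
        · subst h; simp
        · simp [h]
      rw [h3, smul_eq_mul] at h2
      rw [← h2]
      congr 1
      funext j
      by_cases h : j = a
      · subst h; simp only [Function.update_self, if_true]; rw [hsum2, smul_mul_assoc]
      · simp only [Function.update_of_ne h, if_neg h]; rw [hsum1]
    have e : (N : ℂ) * D = ∑ κ : Fin n → Fin (N + 1),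
        (((κ a : ℕ) : ℂ) - ((κ b : ℕ) : ℂ)) * B (fun j => p (κ j) * v j) := by
      rw [hD, mul_sub, hex, hex, ← Finset.sum_sub_distrib]
      simp_rw [sub_mul]
    have := sum_bound hn B hs ho p ?_ ?_ v a b
    · rw [← e, norm_mul, Complex.norm_natCast] at this
      exact this
    · intro i j hij
      ext x
      simp only [coe_mul, Pi.mul_apply, hpx, coe_zero, Pi.zero_apply]
      rw [← Complex.ofReal_mul, hatf_orth _ _ hij]; simp
    · intro c hc
      rw [BoundedContinuousFunction.norm_le zero_le_one]
      intro x
      simp only [coe_sum, Finset.sum_apply, coe_smul, hpx, smul_eq_mul]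
      refine (norm_sum_le _ _).trans ?_
      have := hatf_sum N _ (hre' x).1 (hre' x).2
      rw [Finset.sum_range] at this
      rw [← this]
      refine Finset.sum_le_sum fun i _ => ?_
      rw [norm_mul, Complex.norm_real, Real.norm_eq_abs, abs_of_nonneg (hatf_nonneg _ _)]
      refine mul_le_of_le_one_left (hatf_nonneg _ _) ?_
      rcases hc i with h | h <;> simp [h]
  have hD0 : D = 0 := by
    by_contra hne
    have hpos : 0 < ‖D‖ := norm_pos_iff.2 hne
    obtain ⟨N, hN⟩ := exists_nat_gt (K / ‖D‖)
    rw [div_lt_iff₀ hpos] at hN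
    exact absurd (main N) (not_le.2 hN)
  exact sub_eq_zero.1 hD0

end Part2

section Part3
open BoundedContinuousFunction

/-- values in the unit interval -/
def UI {X : Type*} (g : X → ℂ) : Prop := ∀ x, ∃ t : ℝ, 0 ≤ t ∧ t ≤ 1 ∧ g x = t

lemma UI.re {X : Type*} {g : X → ℂ} (h : UI g) (x : X) :
    0 ≤ (g x).re ∧ (g x).re ≤ 1 ∧ g x = (g x).re := by
  obtain ⟨t, h0, h1, h2⟩ := h x
  rw [h2]; simp [h0, h1]

lemma UI.norm_le {X : Type*} {g : X → ℂ} (h : UI g) (x : X) : ‖g x‖ ≤ 1 := by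
  obtain ⟨t, h0, h1, h2⟩ := h x
  rw [h2, Complex.norm_real, Real.norm_eq_abs, abs_of_nonneg h0]; exact h1

/-- bounded function from a continuous `[0,1]`-valued function -/
noncomputable def mkUI {X : Type*} [TopologicalSpace X] (f : X → ℝ) (hc : Continuous f)
    (h : ∀ x, 0 ≤ f x ∧ f x ≤ 1) : X →ᵇ ℂ :=
  ofNormedAddCommGroup (fun x => ((f x : ℝ) : ℂ)) (Complex.continuous_ofReal.comp hc) 1 (by
    intro x
    rw [Complex.norm_real, Real.norm_eq_abs, abs_of_nonneg (h x).1]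
    exact (h x).2)

lemma mkUI_apply {X : Type*} [TopologicalSpace X] (f : X → ℝ) (hc : Continuous f)
    (h : ∀ x, 0 ≤ f x ∧ f x ≤ 1) (x : X) : mkUI f hc h x = ((f x : ℝ) : ℂ) := rfl

lemma mkUI_UI {X : Type*} [TopologicalSpace X] (f : X → ℝ) (hc : Continuous f)
    (h : ∀ x, 0 ≤ f x ∧ f x ≤ 1) : UI (mkUI f hc h) := fun x => ⟨f x, (h x).1, (h x).2, rfl⟩

lemma root_exists {X : Type*} [TopologicalSpace X] {n : ℕ} (hn : 0 < n) (g : X →ᵇ ℂ) (hg : UI g) :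
    ∃ u : X →ᵇ ℂ, UI u ∧ u ^ n = g := by
  have hc : Continuous fun x => ((g x).re) ^ (1 / (n : ℝ)) :=
    (Complex.continuous_re.comp g.continuous).rpow_const (fun x => Or.inr (by positivity))
  have hb : ∀ x, 0 ≤ ((g x).re) ^ (1 / (n : ℝ)) ∧ ((g x).re) ^ (1 / (n : ℝ)) ≤ 1 := fun x =>
    ⟨Real.rpow_nonneg (hg.re x).1 _, Real.rpow_le_one (hg.re x).1 (hg.re x).2.1 (by positivity)⟩
  refine ⟨mkUI _ hc hb, mkUI_UI _ _ _, ?_⟩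
  ext x
  rw [coe_pow, Pi.pow_apply, mkUI_apply, ← Complex.ofReal_pow, one_div,
    Real.rpow_inv_natCast_pow (hg.re x).1 hn.ne', ← (hg.re x).2.2]

lemma lin_zero {X : Type*} [TopologicalSpace X] (D : (X →ᵇ ℂ) →ₗ[ℂ] ℂ)
    (h : ∀ g : X →ᵇ ℂ, UI g → D g = 0) : D = 0 := by
  have h1 : D 1 = 0 := h 1 fun x => ⟨1, zero_le_one, le_rfl, by simp⟩
  have hreal : ∀ (φ : X → ℝ) (hc : Continuous φ) (C : ℝ), 0 < C → (∀ x, |φ x| ≤ C) →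
      ∀ g : X →ᵇ ℂ, (∀ x, g x = φ x) → D g = 0 := by
    intro φ hc C hC hb g hg
    have hb' : ∀ x, 0 ≤ (φ x / C + 1) / 2 ∧ (φ x / C + 1) / 2 ≤ 1 := by
      intro x
      obtain ⟨h1, h2⟩ := abs_le.1 (hb x)
      have h3 : -1 ≤ φ x / C := by rw [le_div_iff₀ hC]; linarith
      have h4 : φ x / C ≤ 1 := by rw [div_le_iff₀ hC]; linarith
      constructor <;> linarith
    have hc' : Continuous fun x => (φ x / C + 1) / 2 := by fun_prop
    have e : g = (2 * C : ℂ) • mkUI _ hc' hb' - (C : ℂ) • (1 : X →ᵇ ℂ) := by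
      ext x
      have hC' : (C : ℂ) ≠ 0 := by exact_mod_cast hC.ne'
      simp only [coe_sub, coe_smul, Pi.sub_apply, mkUI_apply, hg, coe_one, Pi.one_apply,
        smul_eq_mul]
      push_cast
      field_simp
      ring
    rw [e, map_sub, map_smul, map_smul, h1, h _ (mkUI_UI _ _ _)]; simp
  ext g
  have hbre : ∀ x, |(g x).re| ≤ ‖g‖ + 1 := fun x =>
    (Complex.abs_re_le_norm _).trans ((g.norm_coe_le_norm x).trans (by linarith))
  have hbim : ∀ x, |(g x).im| ≤ ‖g‖ + 1 := fun x =>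
    (Complex.abs_im_le_norm _).trans ((g.norm_coe_le_norm x).trans (by linarith))
  have hcre : Continuous fun x => (g x).re := Complex.continuous_re.comp g.continuous
  have hcim : Continuous fun x => (g x).im := Complex.continuous_im.comp g.continuous
  have hC : 0 < ‖g‖ + 1 := by positivity
  let g1 : X →ᵇ ℂ := ofNormedAddCommGroup (fun x => (((g x).re : ℝ) : ℂ))
    (Complex.continuous_ofReal.comp hcre) (‖g‖ + 1) (by
      intro x; rw [Complex.norm_real]; exact hbre x)
  let g2 : X →ᵇ ℂ := ofNormedAddCommGroup (fun x => (((g x).im : ℝ) : ℂ))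
    (Complex.continuous_ofReal.comp hcim) (‖g‖ + 1) (by
      intro x; rw [Complex.norm_real]; exact hbim x)
  have e : g = g1 + Complex.I • g2 := by
    ext x
    change g x = ((g x).re : ℂ) + Complex.I * ((g x).im : ℂ)
    rw [mul_comm]; exact (Complex.re_add_im _).symm
  rw [e, map_add, map_smul, hreal _ hcre _ hC hbre g1 (fun _ => rfl),
    hreal _ hcim _ hC hbim g2 (fun _ => rfl)]
  simp

lemma assoc {X : Type*} [TopologicalSpace X] {n : ℕ} (hn : 0 < n)
    (B : ContinuousMultilinearMap ℂ (fun _ : Fin n => X →ᵇ ℂ) ℂ)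
    (hs : ∀ (v : Fin n → X →ᵇ ℂ) (σ : Equiv.Perm (Fin n)), (B fun i => v (σ i)) = B v)
    (ho : ∀ f g : X →ᵇ ℂ, f * g = 0 → B (fun _ => f + g) = B (fun _ => f) + B (fun _ => g))
    (r : X →ᵇ ℂ) (v : Fin n → X →ᵇ ℂ) (a b : Fin n) :
    B (fun j => (if j = a then r else 1) * v j) = B (fun j => (if j = b then r else 1) * v j) := by
  let Λ : Fin n → (X →ᵇ ℂ) →ₗ[ℂ] ℂ := fun a =>
    (B.toMultilinearMap.toLinearMap v a) ∘ₗ (LinearMap.mulRight ℂ (v a))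
  have hΛ : ∀ a r, Λ a r = B (fun j => (if j = a then r else 1) * v j) := by
    intro a r
    change B (Function.update v a (r * v a)) = _
    congr 1
    funext j
    by_cases h : j = a
    · subst h; simp
    · simp [h]
  have h0 : Λ a - Λ b = 0 := by
    apply lin_zero
    intro g hg
    rw [LinearMap.sub_apply, hΛ, hΛ, assoc01 hn B hs ho g hg v a b, sub_self]
  rw [← hΛ, ← hΛ, sub_eq_zero.1 h0]

lemma repr_exists {X : Type*} [TopologicalSpace X] {n : ℕ} (hn : 0 < n)
    (B : ContinuousMultilinearMap ℂ (fun _ : Fin n => X →ᵇ ℂ) ℂ)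
    (hs : ∀ (v : Fin n → X →ᵇ ℂ) (σ : Equiv.Perm (Fin n)), (B fun i => v (σ i)) = B v)
    (ho : ∀ f g : X →ᵇ ℂ, f * g = 0 → B (fun _ => f + g) = B (fun _ => f) + B (fun _ => g)) :
    ∃ T : (X →ᵇ ℂ) →ₗ[ℂ] ℂ, ∀ u, B (fun _ => u) = T (u ^ n) := by
  let i0 : Fin n := ⟨0, hn⟩
  refine ⟨B.toMultilinearMap.toLinearMap (fun _ => 1) i0, fun u => ?_⟩
  have key : ∀ s : Finset (Fin n), i0 ∉ s → B (fun _ => u)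
      = B (fun j => if j = i0 then u ^ (s.card + 1) else if j ∈ s then 1 else u) := by
    intro s
    induction s using Finset.induction_on with
    | empty => intro _; simp
    | insert a s ha ih =>
      intro hi
      rw [Finset.mem_insert, not_or] at hi
      rw [ih hi.2]
      have := assoc hn B hs ho u
        (fun j => if j = i0 then u ^ (s.card + 1) else if j ∈ insert a s then 1 else u) a i0
      convert this using 2
      · funext j
        by_cases h1 : j = i0
        · subst h1; simp [hi.1]
        · by_cases h2 : j = a
          · subst h2; simp [h1, ha]
          · simp [h1, h2]
      · funext j
        by_cases h1 : j = i0
        · subst h1; simp [Finset.card_insert_of_notMem ha]; ring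
        · simp [h1]
  rw [key (Finset.univ.erase i0) (by simp)]
  change _ = B (Function.update (fun _ => 1) i0 (u ^ n))
  congr 1
  funext j
  by_cases h1 : j = i0
  · subst h1
    have : n - 1 + 1 = n := by omega
    simp [Finset.card_erase_of_mem, this]
  · simp [h1]

end Part3

section Part4
open BoundedContinuousFunction Filter Topology

/-- evaluation -/
noncomputable def evC {Y : Type*} [TopologicalSpace Y] (y : Y) : C₀(Y, ℂ) →L[ℂ] ℂ :=
  LinearMap.mkContinuous
    { toFun := fun f => f y, map_add' := fun _ _ => rfl, map_smul' := fun _ _ => rfl } 1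
    (fun f => by
      rw [one_mul, ← ZeroAtInftyContinuousMap.norm_toBCF_eq_norm]
      exact f.toBCF.norm_coe_le_norm y)

lemma evC_apply {Y : Type*} [TopologicalSpace Y] (y : Y) (f : C₀(Y, ℂ)) : evC y f = f y := rfl

lemma c0_norm_apply_le {Y : Type*} [TopologicalSpace Y] (f : C₀(Y, ℂ)) (y : Y) : ‖f y‖ ≤ ‖f‖ := by
  rw [← ZeroAtInftyContinuousMap.norm_toBCF_eq_norm]
  exact f.toBCF.norm_coe_le_norm y

lemma c0_norm_le {Y : Type*} [TopologicalSpace Y] (f : C₀(Y, ℂ)) (C : ℝ) (hC : 0 ≤ C)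
    (h : ∀ y, ‖f y‖ ≤ C) : ‖f‖ ≤ C := by
  rw [← ZeroAtInftyContinuousMap.norm_toBCF_eq_norm]
  exact (BoundedContinuousFunction.norm_le hC).2 h

/-- multiplication of a `C₀` function by a bounded function -/
noncomputable def bmF {X : Type*} [TopologicalSpace X] (w : C₀(X, ℂ)) (u : X →ᵇ ℂ) : C₀(X, ℂ) where
  toFun := fun x => u x * w x
  continuous_toFun := u.continuous.mul w.continuous
  zero_at_infty' := by
    have h := w.zero_at_infty'
    rw [tendsto_zero_iff_norm_tendsto_zero] at h ⊢
    have h2 : Tendsto (fun x => ‖u‖ * ‖w.toFun x‖) (cocompact X) (𝓝 0) := by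
      simpa using h.const_mul ‖u‖
    refine squeeze_zero (fun x => norm_nonneg _) (fun x => ?_) h2
    rw [norm_mul]
    exact mul_le_mul_of_nonneg_right (u.norm_coe_le_norm x) (norm_nonneg _)

lemma bmF_apply {X : Type*} [TopologicalSpace X] (w : C₀(X, ℂ)) (u : X →ᵇ ℂ) (x : X) :
    bmF w u x = u x * w x := rfl

/-- continuous linear version -/
noncomputable def bm {X : Type*} [TopologicalSpace X] (w : C₀(X, ℂ)) : (X →ᵇ ℂ) →L[ℂ] C₀(X, ℂ) :=
  LinearMap.mkContinuous
    { toFun := bmF w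
      map_add' := fun u v => by
        ext x; simp only [bmF_apply, ZeroAtInftyContinuousMap.add_apply, coe_add, Pi.add_apply,
          add_mul]
      map_smul' := fun c u => by
        ext x; simp only [bmF_apply, ZeroAtInftyContinuousMap.smul_apply, coe_smul, smul_eq_mul,
          mul_assoc, RingHom.id_apply] } ‖w‖
    (fun u => by
      refine c0_norm_le _ _ (by positivity) fun x => ?_
      change ‖u x * w x‖ ≤ _
      rw [norm_mul, mul_comm]
      exact mul_le_mul (c0_norm_apply_le w x) (u.norm_coe_le_norm x) (norm_nonneg _)
        (norm_nonneg _))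

lemma bm_apply {X : Type*} [TopologicalSpace X] (w : C₀(X, ℂ)) (u : X →ᵇ ℂ) (x : X) :
    bm w u x = u x * w x := rfl

lemma poly_repr {X Y : Type*} [TopologicalSpace X] [TopologicalSpace Y]
    {n : ℕ} (hn : 0 < n) (P : C₀(X, ℂ) → C₀(Y, ℂ))
    (L : ContinuousMultilinearMap ℂ (fun _ : Fin n => C₀(X, ℂ)) C₀(Y, ℂ))
    (hs : ∀ (v : Fin n → C₀(X, ℂ)) (σ : Equiv.Perm (Fin n)), (L fun i => v (σ i)) = L v)
    (hL : ∀ f, P f = L fun _ => f)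
    (horth : ∀ f g : C₀(X, ℂ), f * g = 0 → P (f + g) = P f + P g)
    (w : C₀(X, ℂ)) (y : Y) :
    ∃ T : (X →ᵇ ℂ) →ₗ[ℂ] ℂ, ∀ u, P (bm w u) y = T (u ^ n) := by
  let B : ContinuousMultilinearMap ℂ (fun _ : Fin n => X →ᵇ ℂ) ℂ :=
    (evC y).compContinuousMultilinearMap (L.compContinuousLinearMap (fun _ => bm w))
  have hB : ∀ v, B v = L (fun j => bm w (v j)) y := fun v => rfl
  have hB' : ∀ u, B (fun _ => u) = P (bm w u) y := fun u => by rw [hB, hL]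
  obtain ⟨T, hT⟩ := repr_exists hn B (fun v σ => by
      rw [hB, hB]; exact congrArg (fun f : C₀(Y, ℂ) => f y) (hs (fun j => bm w (v j)) σ))
    (fun f g hfg => by
      rw [hB', hB', hB', map_add, horth]
      · rfl
      · ext x
        have : f x * g x = 0 := by
          have := congrArg (fun h : X →ᵇ ℂ => h x) hfg
          simpa using this
        simp only [ZeroAtInftyContinuousMap.mul_apply, bm_apply, ZeroAtInftyContinuousMap.zero_apply]
        calc f x * w x * (g x * w x) = (f x * g x) * (w x * w x) := by ring
          _ = 0 := by rw [this, zero_mul])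
  exact ⟨T, fun u => by rw [← hB', hT]⟩

lemma level_compact {Y : Type*} [TopologicalSpace Y] (g : C₀(Y, ℂ)) (c : ℝ) (hc : 0 < c) :
    IsCompact {y | c ≤ ‖g y‖} := by
  have h := g.zero_at_infty'
  rw [tendsto_zero_iff_norm_tendsto_zero] at h
  have h2 := h.eventually (gt_mem_nhds hc)
  obtain ⟨K, hK, hKs⟩ := Filter.mem_cocompact.1 h2
  refine hK.of_isClosed_subset (isClosed_le continuous_const g.continuous.norm) ?_
  intro y hy
  by_contra hyK
  have h3 : ‖g y‖ < c := hKs hyK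
  exact absurd h3 (not_lt.2 hy)

lemma norm_attained {Y : Type*} [TopologicalSpace Y] (g : C₀(Y, ℂ)) (hg : ‖g‖ = 1) :
    ∃ y, ‖g y‖ = 1 := by
  have hne : ∃ y0, g y0 ≠ 0 := by
    by_contra h
    push Not at h
    have := c0_norm_le g 0 le_rfl (fun y => by rw [h y, norm_zero])
    linarith
  obtain ⟨y0, hy0⟩ := hne
  have h := g.zero_at_infty'
  rw [tendsto_zero_iff_norm_tendsto_zero] at h
  have h2 := h.eventually (gt_mem_nhds (norm_pos_iff.2 hy0))
  obtain ⟨y, hy⟩ := Continuous.exists_forall_ge' g.continuous.norm y0 (h2.mono fun x hx => hx.le)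
  refine ⟨y, le_antisymm (hg ▸ c0_norm_apply_le g y) ?_⟩
  rw [← hg]
  exact c0_norm_le g _ (norm_nonneg _) hy

/-- the bump functions at `x` -/
def Ex {X : Type*} [TopologicalSpace X] (x : X) (w : C₀(X, ℂ)) : Prop :=
  HasCompactSupport w ∧ w x = 1 ∧ UI w

lemma Ex.nonneg {X : Type*} [TopologicalSpace X] {x : X} {w : C₀(X, ℂ)} (h : Ex x w) (z : X) :
    0 ≤ w z := by
  obtain ⟨t, h0, -, h2⟩ := h.2.2 z
  rw [h2]; exact_mod_cast h0

lemma Ex.norm {X : Type*} [TopologicalSpace X] {x : X} {w : C₀(X, ℂ)} (h : Ex x w) : ‖w‖ = 1 := by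
  refine le_antisymm (c0_norm_le w 1 zero_le_one h.2.2.norm_le) ?_
  have := c0_norm_apply_le w x
  rw [h.2.1] at this; simpa using this

lemma UI.mul {X : Type*} {f g : X → ℂ} (hf : UI f) (hg : UI g) : UI (fun x => f x * g x) := by
  intro x
  obtain ⟨s, s0, s1, hs⟩ := hf x
  obtain ⟨t, t0, t1, ht⟩ := hg x
  exact ⟨s * t, by positivity, mul_le_one₀ s1 t0 t1, by simp only [hs, ht]; push_cast; rfl⟩

lemma Ex.bm {X : Type*} [TopologicalSpace X] {x : X} {w : C₀(X, ℂ)} (h : Ex x w) (u : X →ᵇ ℂ)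
    (hu : UI u) (hux : u x = 1) : Ex x (bm w u) := by
  refine ⟨?_, ?_, ?_⟩
  · exact h.1.mul_left (f := fun x => u x)
  · rw [bm_apply, hux, h.2.1, one_mul]
  · exact hu.mul h.2.2

lemma Ex.exists {X : Type*} [TopologicalSpace X] [LocallyCompactSpace X] [T2Space X]
    (x : X) (K : Set X) (hK : IsCompact K) : ∃ w, Ex x w ∧ ∀ z ∈ K, w z = 1 := by
  obtain ⟨f, h1, -, h3, h4⟩ := exists_continuous_one_zero_of_isCompact
    (hK.union (isCompact_singleton (x := x))) isClosed_empty (Set.disjoint_empty _)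
  have hcs : HasCompactSupport (fun z => ((f z : ℝ) : ℂ)) :=
    h3.comp_left (g := fun t : ℝ => (t : ℂ)) (by simp)
  let w : C₀(X, ℂ) :=
    { toFun := fun z => ((f z : ℝ) : ℂ)
      continuous_toFun := Complex.continuous_ofReal.comp f.continuous
      zero_at_infty' := hcs.is_zero_at_infty }
  have hw : ∀ z, w z = ((f z : ℝ) : ℂ) := fun z => rfl
  refine ⟨w, ⟨hcs, ?_, fun z => ⟨f z, (h4 z).1, (h4 z).2, rfl⟩⟩, ?_⟩
  · rw [hw, h1 (Or.inr rfl)]; simp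
  · intro z hz
    rw [hw, h1 (Or.inl hz)]; simp

lemma avg_eq {ι : Type*} (F : Finset ι) (hF : F.Nonempty) (z : ι → ℂ) (hz : ∀ i ∈ F, ‖z i‖ ≤ 1)
    (c : ℂ) (hc : ‖c‖ = 1) (h : c = (F.card : ℂ)⁻¹ * ∑ i ∈ F, z i) : ∀ i ∈ F, z i = c := by
  have hk : (F.card : ℂ) ≠ 0 := by exact_mod_cast hF.card_ne_zero
  have hcc : c * (starRingEnd ℂ) c = 1 := by
    rw [Complex.mul_conj, Complex.normSq_eq_norm_sq, hc]; simp
  have h1 : ∑ i ∈ F, z i * (starRingEnd ℂ) c = ∑ i ∈ F, (1 : ℂ) := by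
    rw [← Finset.sum_mul]
    have : ∑ i ∈ F, z i = F.card * c := by rw [h]; field_simp
    rw [this, mul_assoc, hcc]; simp
  have h2 : ∑ i ∈ F, (z i * (starRingEnd ℂ) c).re = ∑ i ∈ F, (1 : ℝ) := by
    have := congrArg Complex.re h1
    simpa using this
  have hn : ∀ i ∈ F, ‖z i * (starRingEnd ℂ) c‖ ≤ 1 := by
    intro i hi
    rw [norm_mul, Complex.norm_conj, hc, mul_one]; exact hz i hi
  have h3 := (Finset.sum_eq_sum_iff_of_le (fun i hi => (Complex.re_le_norm _).trans (hn i hi))).1 h2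
  intro i hi
  have h4 := h3 i hi
  have h5 := hn i hi
  set q := z i * (starRingEnd ℂ) c with hq
  have h6 : q = 1 := by
    have h7 : ‖q‖ ^ 2 ≤ 1 := by nlinarith [norm_nonneg q]
    rw [← Complex.normSq_eq_norm_sq, Complex.normSq_apply, h4] at h7
    have : q.im = 0 := by nlinarith
    apply Complex.ext <;> simp [h4, this]
  calc z i = z i * (c * (starRingEnd ℂ) c) := by rw [hcc, mul_one]
    _ = q * c := by rw [hq]; ring
    _ = c := by rw [h6, one_mul]

variable {X Y : Type*} [TopologicalSpace X] [LocallyCompactSpace X] [T2Space X]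
    [TopologicalSpace Y]

lemma finite_int {n : ℕ} (hn : 0 < n) (P : C₀(X, ℂ) → C₀(Y, ℂ))
    (hrep : ∀ (w : C₀(X, ℂ)) (y : Y), ∃ T : (X →ᵇ ℂ) →ₗ[ℂ] ℂ, ∀ u, P (bm w u) y = T (u ^ n))
    (hiso : ∀ f : C₀(X, ℂ), (∀ x, 0 ≤ f x) → ‖P f‖ = ‖f‖ ^ n)
    (x : X) (F : Finset C₀(X, ℂ)) (hF : F.Nonempty) (hFx : ∀ f ∈ F, Ex x f) :
    ∃ y : Y, ∃ c : ℂ, ‖c‖ = 1 ∧ ∀ f ∈ F, P f y = c := by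
  have hk : (F.card : ℂ) ≠ 0 := by exact_mod_cast hF.card_ne_zero
  obtain ⟨w, hw, hwK⟩ := Ex.exists x (⋃ f ∈ F, tsupport f)
    (F.isCompact_biUnion fun f hf => (hFx f hf).1)
  have hbm : ∀ f ∈ F, bm w f.toBCF = f := by
    intro f hf
    ext z
    rw [bm_apply]
    change f z * w z = f z
    by_cases hz : z ∈ tsupport f
    · rw [hwK z (Set.mem_biUnion hf hz), mul_one]
    · rw [image_eq_zero_of_notMem_tsupport hz, zero_mul]
  let G : X →ᵇ ℂ := (F.card : ℂ)⁻¹ • ∑ f ∈ F, f.toBCF ^ n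
  have hGx : ∀ z, G z = (F.card : ℂ)⁻¹ * ∑ f ∈ F, (f z) ^ n := by
    intro z
    simp only [G, coe_smul, coe_sum, Finset.sum_apply, smul_eq_mul, coe_pow, Pi.pow_apply]
    rfl
  have hk' : (0 : ℝ) < F.card := by exact_mod_cast hF.card_pos
  have hG : UI G := by
    intro z
    refine ⟨(F.card : ℝ)⁻¹ * ∑ f ∈ F, (f z).re ^ n, ?_, ?_, ?_⟩
    · refine mul_nonneg (by positivity) (Finset.sum_nonneg fun f hf => ?_)
      exact pow_nonneg ((hFx f hf).2.2.re z).1 _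
    · rw [inv_mul_le_iff₀ hk', mul_one]
      have : ∑ f ∈ F, (f z).re ^ n ≤ ∑ f ∈ F, (1 : ℝ) := Finset.sum_le_sum fun f hf =>
        pow_le_one₀ ((hFx f hf).2.2.re z).1 ((hFx f hf).2.2.re z).2.1
      simpa using this
    · rw [hGx]; push_cast
      congr 1
      refine Finset.sum_congr rfl fun f hf => ?_
      rw [← ((hFx f hf).2.2.re z).2.2]
  obtain ⟨u, hu, hun⟩ := root_exists hn G hG
  have hux : u x = 1 := by
    have h1 : (u x) ^ n = 1 := by
      have h2 : (u ^ n) x = G x := by rw [hun]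
      rw [coe_pow, Pi.pow_apply, hGx] at h2
      rw [h2, Finset.sum_congr rfl (fun f hf => by rw [(hFx f hf).2.1, one_pow])]
      simp [hk]
    obtain ⟨t, t0, t1, ht⟩ := hu x
    rw [ht] at h1 ⊢
    have h3 : t ^ n = 1 := by exact_mod_cast h1
    rw [(pow_eq_one_iff_of_nonneg t0 hn.ne').1 h3]; simp
  have hE := hw.bm u hu hux
  have hnorm : ‖P (bm w u)‖ = 1 := by rw [hiso _ hE.nonneg, hE.norm, one_pow]
  obtain ⟨y, hy⟩ := norm_attained _ hnorm
  obtain ⟨T, hT⟩ := hrep w y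
  refine ⟨y, P (bm w u) y, hy, ?_⟩
  refine avg_eq F hF (fun f => P f y) ?_ _ hy ?_
  · intro f hf
    refine (c0_norm_apply_le _ _).trans ?_
    rw [hiso f (hFx f hf).nonneg, (hFx f hf).norm, one_pow]
  · rw [hT, hun]
    simp only [G]
    rw [map_smul, map_sum, smul_eq_mul]
    congr 1
    refine Finset.sum_congr rfl fun f hf => ?_
    rw [← hT, hbm f hf]

lemma exists_point {n : ℕ} (hn : 0 < n) (P : C₀(X, ℂ) → C₀(Y, ℂ))
    (hrep : ∀ (w : C₀(X, ℂ)) (y : Y), ∃ T : (X →ᵇ ℂ) →ₗ[ℂ] ℂ, ∀ u, P (bm w u) y = T (u ^ n))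
    (hiso : ∀ f : C₀(X, ℂ), (∀ x, 0 ≤ f x) → ‖P f‖ = ‖f‖ ^ n) (x : X) :
    ∃ y : Y, ∃ c : ℂ, ‖c‖ = 1 ∧ ∀ f, Ex x f → P f y = c := by
  classical
  obtain ⟨f0, hf0, -⟩ := Ex.exists x ∅ isCompact_empty
  have hcomp : IsCompact {y | ‖P f0 y‖ = 1} :=
    (level_compact (P f0) 1 one_pos).of_isClosed_subset
      (isClosed_eq (P f0).continuous.norm continuous_const) (fun y hy => le_of_eq (Eq.symm hy))
  obtain ⟨y, hy1, hy2⟩ := hcomp.inter_iInter_nonempty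
    (fun f : {f // Ex x f} => {y | P f.1 y = P f0 y})
    (fun f => isClosed_eq (P f.1).continuous (P f0).continuous) (by
      intro S
      obtain ⟨y, c, hc, h⟩ := finite_int hn P hrep hiso x (insert f0 (S.image Subtype.val))
        (Finset.insert_nonempty _ _) (by
          intro f hf
          rcases Finset.mem_insert.1 hf with rfl | hf
          · exact hf0
          · obtain ⟨g, -, rfl⟩ := Finset.mem_image.1 hf
            exact g.2)
      have h0 := h f0 (Finset.mem_insert_self _ _)
      refine ⟨y, ?_, ?_⟩
      · change ‖P f0 y‖ = 1
        rw [h0, hc]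
      · refine Set.mem_iInter₂.2 fun f hf => ?_
        change P f.1 y = P f0 y
        rw [h0, h f.1 (Finset.mem_insert_of_mem (Finset.mem_image_of_mem _ hf))])
  refine ⟨y, P f0 y, hy1, fun f hf => ?_⟩
  exact Set.mem_iInter.1 hy2 ⟨f, hf⟩

lemma point_rep {n : ℕ} (hn : 0 < n) (P : C₀(X, ℂ) → C₀(Y, ℂ)) (hPc : Continuous P)
    (hrep : ∀ (w : C₀(X, ℂ)) (y : Y), ∃ T : (X →ᵇ ℂ) →ₗ[ℂ] ℂ, ∀ u, P (bm w u) y = T (u ^ n))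
    (x : X) (y : Y) (c : ℂ) (h : ∀ f, Ex x f → P f y = c) (f : C₀(X, ℂ)) :
    P f y = c * (f x) ^ n := by
  have step : ∀ w, Ex x w → P (bm w f.toBCF) y = c * (f x) ^ n := by
    intro w hw
    obtain ⟨T, hT⟩ := hrep w y
    have h1 : ∀ g : X →ᵇ ℂ, UI g → g x = 1 → T g = c := by
      intro g hg hgx
      obtain ⟨u, hu, rfl⟩ := root_exists hn g hg
      rw [← hT]
      refine h _ (hw.bm u hu ?_)
      rw [coe_pow, Pi.pow_apply] at hgx
      obtain ⟨t, t0, t1, ht⟩ := hu x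
      rw [ht] at hgx ⊢
      have h3 : t ^ n = 1 := by exact_mod_cast hgx
      rw [(pow_eq_one_iff_of_nonneg t0 hn.ne').1 h3]; simp
    let ev : (X →ᵇ ℂ) →ₗ[ℂ] ℂ :=
      { toFun := fun g => c * g x
        map_add' := fun a b => by simp [mul_add]
        map_smul' := fun a b => by simp; ring }
    have hD : T - ev = 0 := by
      apply lin_zero
      intro g hg
      have hcre : Continuous fun z => (g z).re := Complex.continuous_re.comp g.continuous
      have hc1 : Continuous fun z => 1 - max ((g z).re - (g x).re) 0 := by fun_prop
      have hc2 : Continuous fun z => 1 - max ((g x).re - (g z).re) 0 := by fun_prop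
      have hb1 : ∀ z, 0 ≤ 1 - max ((g z).re - (g x).re) 0 ∧
          1 - max ((g z).re - (g x).re) 0 ≤ 1 := by
        intro z
        have := hg.re z; have := hg.re x
        have h3 : max ((g z).re - (g x).re) 0 ≤ 1 := max_le (by linarith) zero_le_one
        have h4 := le_max_right ((g z).re - (g x).re) 0
        constructor <;> linarith
      have hb2 : ∀ z, 0 ≤ 1 - max ((g x).re - (g z).re) 0 ∧
          1 - max ((g x).re - (g z).re) 0 ≤ 1 := by
        intro z
        have := hg.re z; have := hg.re x
        have h3 : max ((g x).re - (g z).re) 0 ≤ 1 := max_le (by linarith) zero_le_one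
        have h4 := le_max_right ((g x).re - (g z).re) 0
        constructor <;> linarith
      have e : g = g x • (1 : X →ᵇ ℂ) - mkUI _ hc1 hb1 + mkUI _ hc2 hb2 := by
        ext z
        simp only [coe_add, coe_sub, coe_smul, Pi.add_apply, Pi.sub_apply, mkUI_apply, coe_one,
          Pi.one_apply, smul_eq_mul, mul_one]
        rw [(hg.re z).2.2, (hg.re x).2.2]
        simp only [Complex.ofReal_re]
        norm_cast
        rcases le_total (g z).re (g x).re with h3 | h3
        · rw [max_eq_right (by linarith), max_eq_left (by linarith)]; ring
        · rw [max_eq_left (by linarith), max_eq_right (by linarith)]; ring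
      have e2 : T g = c * g x := by
        rw [e, map_add, map_sub, map_smul, h1 1 (fun x => ⟨1, zero_le_one, le_rfl, by simp⟩) rfl,
          h1 _ (mkUI_UI _ _ _) (by rw [mkUI_apply]; simp),
          h1 _ (mkUI_UI _ _ _) (by rw [mkUI_apply]; simp), ← e]
        rw [smul_eq_mul]; ring
      rw [LinearMap.sub_apply, e2]
      exact sub_self _
    rw [hT, sub_eq_zero.1 hD]
    rfl
  have hclosed : IsClosed {g : C₀(X, ℂ) | P g y = c * (f x) ^ n} :=
    isClosed_eq ((evC y).continuous.comp hPc) continuous_const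
  have hmem : f ∈ closure {g : C₀(X, ℂ) | P g y = c * (f x) ^ n} := by
    rw [Metric.mem_closure_iff]
    intro ε hε
    obtain ⟨w, hw, hwK⟩ := Ex.exists x _ (level_compact f (ε / 4) (by positivity))
    refine ⟨bm w f.toBCF, step w hw, ?_⟩
    rw [dist_eq_norm]
    refine lt_of_le_of_lt (c0_norm_le _ (ε / 2) (by positivity) fun z => ?_) (by linarith)
    rw [ZeroAtInftyContinuousMap.sub_apply, bm_apply]
    change ‖f z - f z * w z‖ ≤ _
    by_cases hz : ε / 4 ≤ ‖f z‖
    · rw [hwK z hz, mul_one, sub_self, norm_zero]; positivity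
    · have h2 : ‖f z * w z‖ ≤ ‖f z‖ := by
        rw [norm_mul]; exact mul_le_of_le_one_right (norm_nonneg _) (hw.2.2.norm_le z)
      have := norm_sub_le (f z) (f z * w z)
      linarith
  exact hclosed.closure_subset hmem

end Part4

section Part5
open Filter Topology

/-- `P` at `y` is the weighted power at `x`. -/
def PtRep {X Y : Type*} [TopologicalSpace X] [TopologicalSpace Y] (n : ℕ)
    (P : C₀(X, ℂ) → C₀(Y, ℂ)) (y : Y) (x : X) (c : ℂ) : Prop :=
  ‖c‖ = 1 ∧ ∀ f, P f y = c * (f x) ^ n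

lemma PtRep.unique {X Y : Type*} [TopologicalSpace X] [LocallyCompactSpace X] [T2Space X]
    [TopologicalSpace Y] {n : ℕ} (hn : 0 < n) {P : C₀(X, ℂ) → C₀(Y, ℂ)} {y : Y} {x x' : X}
    {c c' : ℂ} (h : PtRep n P y x c) (h' : PtRep n P y x' c') : x = x' ∧ c = c' := by
  have hx : x = x' := by
    by_contra hne
    obtain ⟨w, hw, -⟩ := Ex.exists x ∅ isCompact_empty
    obtain ⟨f, h1, h2, -, h4⟩ := exists_continuous_one_zero_of_isCompact
      (isCompact_singleton (x := x)) (isClosed_singleton (x := x')) (by simpa using hne)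
    have h5 : ∀ z, 0 ≤ f z ∧ f z ≤ 1 := fun z => ⟨(h4 z).1, (h4 z).2⟩
    obtain ⟨u, hu⟩ : ∃ u, u = mkUI f f.continuous h5 := ⟨_, rfl⟩
    have e1 : (bm w u) x = 1 := by
      rw [bm_apply, hu, mkUI_apply, h1 rfl, hw.2.1]; simp
    have e2 : (bm w u) x' = 0 := by
      rw [bm_apply, hu, mkUI_apply, h2 rfl]; simp
    have e3 := h.2 (bm w u)
    rw [h'.2 (bm w u), e1, e2, zero_pow hn.ne', one_pow, mul_zero, mul_one] at e3
    have := h.1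
    rw [← e3, norm_zero] at this
    exact zero_ne_one this
  subst hx
  obtain ⟨w, hw, -⟩ := Ex.exists x ∅ isCompact_empty
  have e3 := h.2 w
  rw [h'.2 w, hw.2.1, one_pow, mul_one, mul_one] at e3
  exact ⟨rfl, e3.symm⟩

lemma PtRep.limit {X Y : Type*} [TopologicalSpace X]
    [TopologicalSpace Y] {n : ℕ} (hn : 0 < n) {P : C₀(X, ℂ) → C₀(Y, ℂ)}
    (φ : Y → X) (h : Y → ℂ) (U : Ultrafilter Y) (y0 : Y) (hU : (U : Filter Y) ≤ 𝓝 y0)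
    (hev : ∀ᶠ y in (U : Filter Y), PtRep n P y (φ y) (h y)) (f0 : C₀(X, ℂ)) (hf0 : P f0 y0 ≠ 0) :
    ∃ x0 c, PtRep n P y0 x0 c ∧ Tendsto φ U (𝓝 x0) ∧ Tendsto h U (𝓝 c) := by
  -- the coefficients converge
  have hcomp : IsCompact (Metric.sphere (0 : ℂ) 1) := isCompact_sphere _ _
  obtain ⟨c, hc, hcl⟩ := hcomp.ultrafilter_le_nhds (U.map h) (by
    rw [le_principal_iff]
    change ∀ᶠ y in (U : Filter Y), h y ∈ Metric.sphere (0 : ℂ) 1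
    filter_upwards [hev] with y hy
    simpa using hy.1)
  have hhc : Tendsto h U (𝓝 c) := hcl
  -- the points converge
  have hPt : ∀ f, Tendsto (fun y => P f y) U (𝓝 (P f y0)) := fun f =>
    ((P f).continuous.tendsto y0).mono_left hU
  have hpos : 0 < ‖P f0 y0‖ := norm_pos_iff.2 hf0
  set d : ℝ := min 1 (‖P f0 y0‖ / 2) with hd
  have hd0 : 0 < d := lt_min one_pos (by positivity)
  have hbig : ∀ᶠ y in (U : Filter Y), ‖P f0 y0‖ / 2 < ‖P f0 y‖ :=
    (hPt f0).norm.eventually (lt_mem_nhds (by linarith))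
  obtain ⟨x0, -, hx0⟩ := (level_compact f0 d hd0).ultrafilter_le_nhds (U.map φ) (by
    rw [le_principal_iff]
    change ∀ᶠ y in (U : Filter Y), d ≤ ‖f0 (φ y)‖
    filter_upwards [hev, hbig] with y hy hb
    rw [hy.2, norm_mul, hy.1, one_mul, norm_pow] at hb
    by_contra hlt
    rw [not_le] at hlt
    have h1 : ‖f0 (φ y)‖ ≤ 1 := hlt.le.trans (min_le_left _ _)
    have h2 : ‖f0 (φ y)‖ ^ n ≤ ‖f0 (φ y)‖ := pow_le_of_le_one (norm_nonneg _) h1 hn.ne'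
    have h3 : d ≤ ‖P f0 y0‖ / 2 := min_le_right _ _
    linarith)
  have hφ : Tendsto φ U (𝓝 x0) := hx0
  refine ⟨x0, c, ⟨by simpa using hc, fun f => ?_⟩, hφ, hhc⟩
  refine tendsto_nhds_unique (hPt f) ?_
  have h1 : Tendsto (fun y => h y * (f (φ y)) ^ n) U (𝓝 (c * (f x0) ^ n)) :=
    hhc.mul (((f.continuous.tendsto x0).comp hφ).pow n)
  refine h1.congr' ?_
  filter_upwards [hev] with y hy
  exact (hy.2 f).symm

end Part5

/-- Banach–Stone for `n`-isometries: an orthogonally additive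
`n`-homogeneous polynomial `P : C₀(X) → C₀(Y)` which is an `n`-isometry on positive
elements and has regular range is of the form `P(f)(y) = h(y)(f(φ(y)))ⁿ` for a
continuous unimodular `h` and a homeomorphism `φ : Y → X`. -/
theorem stmt_18 {X Y : Type*} [TopologicalSpace X] [LocallyCompactSpace X] [T2Space X]
    [TopologicalSpace Y] [LocallyCompactSpace Y] [T2Space Y]
    (n : ℕ) (hn : 0 < n) (P : C₀(X, ℂ) → C₀(Y, ℂ)) (hP : IsHomogPolynomial n P)
    (horth : ∀ f g : C₀(X, ℂ), f * g = 0 → P (f + g) = P f + P g)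
    (hiso : ∀ f : C₀(X, ℂ), (∀ x, 0 ≤ f x) → ‖P f‖ = ‖f‖ ^ n)
    (hreg : ∀ (Y₀ : Set Y), IsClosed Y₀ → ∀ y ∉ Y₀,
      ∃ g ∈ Set.range P, (∀ z ∈ Y₀, g z = 0) ∧ g y ≠ 0) :
    ∃ (h : Y → ℂ) (φ : Y ≃ₜ X),
      Continuous h ∧ (∀ y, ‖h y‖ = 1) ∧
      ∀ (f : C₀(X, ℂ)) (y : Y), P f y = h y * (f (φ y)) ^ n := by
  classical
  obtain ⟨L, hs, hL⟩ := hP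
  have hPc : Continuous P := by
    have : P = fun f => L fun _ => f := funext hL
    rw [this]
    exact L.cont.comp (continuous_pi fun _ => continuous_id)
  have hrep := fun w y => poly_repr hn P L hs hL horth w y
  have hpt : ∀ x, ∃ y c, PtRep n P y x c := by
    intro x
    obtain ⟨y, c, hc, h⟩ := exists_point hn P hrep hiso x
    exact ⟨y, c, hc, point_rep hn P hPc hrep x y c h⟩
  have hne : ∀ y, ∃ f, P f y ≠ 0 := by
    intro y
    obtain ⟨_, ⟨f, rfl⟩, -, hf⟩ := hreg ∅ isClosed_empty y (Set.notMem_empty y)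
    exact ⟨f, hf⟩
  have hP0 : P 0 = 0 := by
    have := horth 0 0 (by simp)
    simpa using this
  -- every point of `Y` is representable
  have hall : ∀ y, ∃ x c, PtRep n P y x c := by
    intro y0
    have hcl : y0 ∈ closure {y | ∃ x c, PtRep n P y x c} := by
      by_contra hy0
      obtain ⟨_, ⟨f, rfl⟩, hf0, hf⟩ := hreg _ isClosed_closure y0 hy0
      apply hf
      have : f = 0 := by
        ext x
        obtain ⟨y, c, hy⟩ := hpt x
        have h1 := hf0 y (subset_closure ⟨x, c, hy⟩)
        rw [hy.2] at h1
        rcases mul_eq_zero.1 h1 with h2 | h2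
        · have h3 := hy.1
          rw [h2, norm_zero] at h3
          exact absurd h3 zero_ne_one
        · exact eq_zero_of_pow_eq_zero h2
      rw [this, hP0]; rfl
    obtain ⟨U, hUm, hU⟩ := mem_closure_iff_ultrafilter.1 hcl
    obtain ⟨y1, x1, c1, h1⟩ : ∃ y x c, PtRep n P y x c := U.nonempty_of_mem hUm
    have hch : ∀ y, ∃ q : X × ℂ, (∃ x c, PtRep n P y x c) → PtRep n P y q.1 q.2 := by
      intro y
      by_cases h : ∃ x c, PtRep n P y x c
      · obtain ⟨x, c, h⟩ := h
        exact ⟨(x, c), fun _ => h⟩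
      · exact ⟨(x1, c1), fun h' => absurd h' h⟩
    choose q hq using hch
    obtain ⟨f0, hf0⟩ := hne y0
    obtain ⟨x0, c, h, -⟩ := PtRep.limit hn (fun y => (q y).1) (fun y => (q y).2) U y0 hU
      (by filter_upwards [hUm] with y hy using hq y hy) f0 hf0
    exact ⟨x0, c, h⟩
  choose φ h hφ using hall
  have hcont : ∀ y0, ∀ U : Ultrafilter Y, (U : Filter Y) ≤ nhds y0 →
      Filter.Tendsto φ U (nhds (φ y0)) ∧ Filter.Tendsto h U (nhds (h y0)) := by
    intro y0 U hU
    obtain ⟨f0, hf0⟩ := hne y0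
    obtain ⟨x0, c, h1, h2, h3⟩ := PtRep.limit hn φ h U y0 hU (Filter.Eventually.of_forall hφ) f0 hf0
    obtain ⟨e1, e2⟩ := (hφ y0).unique hn h1
    rw [e1, e2]
    exact ⟨h2, h3⟩
  have hφc : Continuous φ := continuous_iff_ultrafilter.2 fun y U hU => (hcont y U hU).1
  have hhc : Continuous h := continuous_iff_ultrafilter.2 fun y U hU => (hcont y U hU).2
  have hz : ∀ f y, P f y = 0 ↔ f (φ y) = 0 := by
    intro f y
    rw [(hφ y).2]
    have : h y ≠ 0 := by
      intro h0
      have := (hφ y).1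
      rw [h0, norm_zero] at this
      exact zero_ne_one this
    simp [this, hn.ne']
  have hinj : Function.Injective φ := by
    intro y y' he
    by_contra hyy
    obtain ⟨_, ⟨f, rfl⟩, h1, h2⟩ := hreg {y'} isClosed_singleton y hyy
    have h3 := h1 y' rfl
    rw [hz] at h3
    exact h2 ((hz f y).2 (he ▸ h3))
  have hsurj : Function.Surjective φ := by
    intro x
    obtain ⟨y, c, hy⟩ := hpt x
    exact ⟨y, ((hφ y).unique hn hy).1⟩
  have hclosed : IsClosedMap φ := by
    intro S hS
    rw [← isOpen_compl_iff, isOpen_iff_mem_nhds]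
    intro x hx
    obtain ⟨y, rfl⟩ := hsurj x
    have hy : y ∉ S := fun hy => hx ⟨y, hy, rfl⟩
    obtain ⟨_, ⟨f, rfl⟩, h1, h2⟩ := hreg S hS y hy
    have h3 : f (φ y) ≠ 0 := fun h => h2 ((hz f y).2 h)
    filter_upwards [f.continuous.continuousAt.eventually_ne h3] with z hz' ⟨y', hy', he⟩
    exact hz' (he ▸ (hz f y').1 (h1 y' hy'))
  let Φ : Y ≃ₜ X := (Equiv.ofBijective φ ⟨hinj, hsurj⟩).toHomeomorphOfContinuousClosed hφc hclosed
  exact ⟨h, Φ, hhc, fun y => (hφ y).1, fun f y => (hφ y).2 f⟩
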